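/- There is no 4×4 matrix B over F_3 with the following property: letting F = F_3[x]/(f) for a fixed irreducible quartic f with primitive root ω = x, and coloring each nonzero v ∈ F ≅ F_3^4 by c(v) = m mod 5 where v = ω^m, B satisfies c(Bv) = σ(c(v)) for all nonzero v, where σ is the transposition (1 2) of the color set {0,1,2,3,4}. -/

import Mathlib

open Polynomial

/-!
Write `K` for the field with 81 elements, `E = {e | e ^ 9 = e}` for its subfield with 9 elements,
and `θ = ω ^ 5`, so that `θ ^ 9 = -θ` and `K = E ⊕ θ E`, the two summands being the eigenspaces of
`x ↦ x ^ 9`. The subgroup of fifth powers consists of the 16th roots of unity, i.e. of the nonzero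
elements of `E ∪ θ E`.

A linear map `B` permuting the colors sends `λ x` to a multiple of `B x` by a 16th root of unity
whenever `λ` is one. For `λ ∈ E` additivity forces the multiplier `B (λ x) / B x` to lie in `E`
(`ratio_fixed`), and for `λ = θ` injectivity forces it to lie in `θ E`. In either case the multiplier
cannot depend on `x` (`ratio_const`), by comparing `x`, `y` and `x + y` for `B x`, `B y` independent
over `E`. So `B (λ x) * B 1 = B λ * B x` for `λ ∈ E` and for `λ = θ`, hence for all `λ`: up to the
scalar `B 1`, `B` is multiplicative. Then `B (ω ^ 2) * B 1 = B ω ^ 2`, which compares the colors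
`1 + 0` and `2 + 2` modulo 5, a contradiction.
-/

/-- If all multipliers `B (l * x) / B x` lie in one eigenspace of `x ↦ x ^ 9`, then they are all
equal. -/
lemma ratio_const {K : Type*} [Field K] [CharP K 3] (B : K →+ K)
    (hinj : ∀ x, B x = 0 → x = 0) (hsurj : Function.Surjective B)
    (θ : K) (hθ : θ ^ 9 ≠ θ) (l ε : K) (hε : ε ≠ 0)
    (h : ∀ x, x ≠ 0 → (B (l * x) / B x) ^ 9 = ε * (B (l * x) / B x)) (x : K) :
    B (l * x) * B 1 = B l * B x := by
  have sub9 : ∀ a b : K, (a - b) ^ 9 = a ^ 9 - b ^ 9 := fun a b => by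
    have := sub_pow_char_pow (p := 3) a b (n := 2)
    simpa using this
  have hB0 : ∀ x, x ≠ 0 → B x ≠ 0 := fun x hx h0 => hx (hinj x h0)
  have neg9 : (-1 : K) ^ 9 = -1 := by norm_num
  -- Independence of `B x` and `B y` over the fixed field makes the multipliers agree.
  have key : ∀ x y, x ≠ 0 → y ≠ 0 → (B y / B x) ^ 9 ≠ B y / B x →
      B (l * x) / B x = B (l * y) / B y := by
    intro x y hx hy hu
    have hbx := hB0 x hx
    have hby := hB0 y hy
    have hz : x + y ≠ 0 := by
      intro h0
      apply hu
      have : y = -x := by linear_combination h0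
      rw [this, map_neg, neg_div, div_self hbx, neg9]
    have hbz := hB0 _ hz
    have h1 := h x hx
    have h2 := h y hy
    have h3 := h _ hz
    have e1 : B (l * x) = B (l * x) / B x * B x := by field_simp
    have e2 : B (l * y) = B (l * y) / B y * B y := by field_simp
    have e3 : B (l * (x + y)) = B (l * (x + y)) / B (x + y) * B (x + y) := by field_simp
    generalize B (l * x) / B x = r at *
    generalize B (l * y) / B y = s at *
    generalize B (l * (x + y)) / B (x + y) = t at *
    rw [mul_add, map_add, map_add, e1, e2] at e3
    by_cases hts : t = s
    · subst hts
      have : (r - t) * B x = 0 := by linear_combination e3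
      rcases mul_eq_zero.1 this with h0 | h0
      · linear_combination h0
      · exact absurd h0 hbx
    · exfalso
      have hts' : t - s ≠ 0 := sub_ne_zero.2 hts
      apply hu
      have : B y / B x = (r - t) / (t - s) := by
        field_simp
        linear_combination -e3
      rw [this, div_pow, sub9, sub9, h1, h2, h3, ← mul_sub, ← mul_sub,
        mul_div_mul_left _ _ hε]
  by_cases hx : x = 0
  · simp [hx]
  have hb1 := hB0 1 one_ne_zero
  have hbx := hB0 x hx
  have main : B (l * x) / B x = B (l * 1) / B 1 := by
    by_cases hu : (B x / B 1) ^ 9 = B x / B 1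
    · -- If `B x` and `B 1` are dependent, compare both with a preimage of `θ * B 1`.
      obtain ⟨y, hy⟩ := hsurj (θ * B 1)
      have hθ0 : θ ≠ 0 := by rintro rfl; simp at hθ
      have hy0 : y ≠ 0 := by
        rintro rfl
        rw [map_zero] at hy
        exact mul_ne_zero hθ0 hb1 hy.symm
      have k1 := key 1 y one_ne_zero hy0 (by rwa [hy, mul_div_cancel_right₀ _ hb1])
      have k2 := key x y hx hy0 (by
        have : B y / B x = θ / (B x / B 1) := by rw [hy]; field_simp
        rw [this, div_pow, hu]
        intro h0
        have hne : B x / B 1 ≠ 0 := div_ne_zero hbx hb1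
        exact hθ ((div_left_inj' hne).1 h0))
      rw [k1, k2]
    · exact (key 1 x one_ne_zero hx hu).symm
  rw [mul_one] at main
  field_simp at main
  linear_combination main

/-- If multiplying by 16th roots of unity changes the values of `B` only by 16th roots of unity,
then the multipliers `B (e * x) / B x` of elements `e` of the 9-element subfield stay in that
subfield. -/
lemma ratio_fixed {K : Type*} [Field K] [CharP K 3] (B : K →+ K)
    (hinj : ∀ x, B x = 0 → x = 0)
    (hcol : ∀ l x : K, x ≠ 0 → l ^ 16 = 1 → (B (l * x)) ^ 16 = (B x) ^ 16)
    (e : K) (he : e ^ 9 = e) (x : K) (hx : x ≠ 0) :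
    (B (e * x) / B x) ^ 9 = B (e * x) / B x := by
  have add9 : ∀ a b : K, (a + b) ^ 9 = a ^ 9 + b ^ 9 := fun a b => by
    have := add_pow_char_pow (p := 3) a b (n := 2)
    simpa using this
  have hbx : B x ≠ 0 := fun h0 => hx (hinj x h0)
  have pm : ∀ a : K, a ^ 9 = a →
      (B (a * x) / B x) ^ 9 = B (a * x) / B x ∨ (B (a * x) / B x) ^ 9 = -(B (a * x) / B x) := by
    intro a ha
    by_cases ha0 : a = 0
    · simp [ha0]
    have h8 : a ^ 8 = 1 := mul_right_cancel₀ ha0 (by linear_combination ha)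
    have h16 := hcol a x hx (by linear_combination (a ^ 8 + 1) * h8)
    have hr : (B (a * x) / B x) ^ 16 = 1 := by
      rw [div_pow, h16, div_self (pow_ne_zero _ hbx)]
    generalize B (a * x) / B x = r at *
    have : (r ^ 8 - 1) * (r ^ 8 + 1) = 0 := by linear_combination hr
    rcases mul_eq_zero.1 this with h | h
    · left; linear_combination r * h
    · right; linear_combination r * h
  have h2 : (2 : K) ≠ 0 := by
    intro h
    have h3 : (3 : K) = 0 := by exact_mod_cast CharP.cast_eq_zero K 3
    exact one_ne_zero (α := K) (by linear_combination h3 - h)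
  -- A multiplier `r` with `r ^ 9 = -r` is excluded by also looking at `e + 1`, with multiplier `r + 1`.
  have h1 : B ((e + 1) * x) / B x = B (e * x) / B x + 1 := by
    rw [add_mul, one_mul, map_add, add_div, div_self hbx]
  have p0 := pm e he
  have p1 := pm (e + 1) (by rw [add9, he, one_pow])
  rw [h1, add9, one_pow] at p1
  generalize B (e * x) / B x = r at *
  rcases p0 with h | h
  · exact h
  · rcases p1 with h' | h'
    · have : (2 : K) * r = 0 := by linear_combination h - h'
      have hr : r = 0 := (mul_eq_zero.1 this).resolve_left h2
      simp [hr]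
    · exact absurd (by linear_combination h' - h) h2

/-- `B` is multiplicative up to the scalar `B 1`. -/
lemma mul_of_color {K : Type*} [Field K] [Finite K] [CharP K 3] (h81 : ∀ z : K, z ^ 81 = z)
    (B : K →+ K) (hinj : ∀ x, B x = 0 → x = 0)
    (hcol : ∀ l x : K, x ≠ 0 → l ^ 16 = 1 → (B (l * x)) ^ 16 = (B x) ^ 16)
    (θ : K) (hθ8 : θ ^ 8 = -1) (z x : K) : B (z * x) * B 1 = B z * B x := by
  have add9 : ∀ a b : K, (a + b) ^ 9 = a ^ 9 + b ^ 9 := fun a b => by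
    have := add_pow_char_pow (p := 3) a b (n := 2)
    simpa using this
  have sub9 : ∀ a b : K, (a - b) ^ 9 = a ^ 9 - b ^ 9 := fun a b => by
    have := sub_pow_char_pow (p := 3) a b (n := 2)
    simpa using this
  have neg9 : ∀ a : K, (-a) ^ 9 = -a ^ 9 := fun a => by ring
  have h3 : (3 : K) = 0 := by exact_mod_cast CharP.cast_eq_zero K 3
  have h2 : (2 : K) ≠ 0 := by
    intro h
    exact one_ne_zero (α := K) (by linear_combination h3 - h)
  have hθ0 : θ ≠ 0 := by
    rintro rfl
    simp at hθ8
  have hθ9 : θ ^ 9 ≠ θ := by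
    intro h
    have : 2 * θ = 0 := by linear_combination θ * hθ8 - h
    exact (mul_ne_zero h2 hθ0) this
  have hI : Function.Injective B := (injective_iff_map_eq_zero B).2 hinj
  have hS : Function.Surjective B := Finite.surjective_of_injective hI
  have hB0 : ∀ x, x ≠ 0 → B x ≠ 0 := fun x hx h0 => hx (hinj x h0)
  have hb1 := hB0 1 one_ne_zero
  have hE : ∀ e : K, e ^ 9 = e → ∀ x, B (e * x) * B 1 = B e * B x := fun e he x =>
    ratio_const B hinj hS θ hθ9 e 1 one_ne_zero
      (fun x hx => by rw [one_mul]; exact ratio_fixed B hinj hcol e he x hx) x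
  have hEsurj : ∀ r : K, r ^ 9 = r → ∃ e : K, e ^ 9 = e ∧ B e = r * B 1 := by
    let g : {e : K // e ^ 9 = e} → {e : K // e ^ 9 = e} := fun e =>
      ⟨B e / B 1, by simpa using ratio_fixed B hinj hcol e.1 e.2 1 one_ne_zero⟩
    have hg : Function.Injective g := by
      intro a b hab
      have : B a / B 1 = B b / B 1 := congrArg Subtype.val hab
      exact Subtype.ext (hI ((div_left_inj' hb1).1 this))
    intro r hr
    obtain ⟨e, he⟩ := Finite.surjective_of_injective hg ⟨r, hr⟩
    refine ⟨e.1, e.2, ?_⟩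
    have : B e / B 1 = r := congrArg Subtype.val he
    rw [← this]
    field_simp
  have hT : ∀ x, B (θ * x) * B 1 = B θ * B x := by
    refine ratio_const B hinj hS θ hθ9 θ (-1) (neg_ne_zero.2 one_ne_zero) ?_
    intro x hx
    have hbx := hB0 x hx
    have h16 := hcol θ x hx (by linear_combination (θ ^ 8 - 1) * hθ8)
    have hr : (B (θ * x) / B x) ^ 16 = 1 := by
      rw [div_pow, h16, div_self (pow_ne_zero _ hbx)]
    have er : B (θ * x) = B (θ * x) / B x * B x := by field_simp
    generalize B (θ * x) / B x = r at *
    have : (r ^ 8 - 1) * (r ^ 8 + 1) = 0 := by linear_combination hr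
    rcases mul_eq_zero.1 this with h | h
    · -- A multiplier in the subfield is already attained by some `e` in it, so `θ = e`.
      exfalso
      obtain ⟨e, he, hbe⟩ := hEsurj r (by linear_combination r * h)
      have h1 := hE e he x
      have h4 : B (e * x) = B (θ * x) :=
        mul_right_cancel₀ hb1 (by rw [h1, hbe, er]; ring)
      have h5 := mul_right_cancel₀ hx (hI h4)
      rw [h5] at he
      exact hθ9 he
    · linear_combination r * h
  -- The decomposition of `z` into eigenvectors of `z ↦ z ^ 9`; note that `1 / 2 = -1`.
  obtain ⟨e, e', he, he', hz⟩ : ∃ e e' : K, e ^ 9 = e ∧ e' ^ 9 = e' ∧ z = e + e' * θ := by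
    have h99 : (z ^ 9) ^ 9 = z := by rw [← pow_mul]; exact h81 z
    refine ⟨-(z + z ^ 9), -(z - z ^ 9) / θ, ?_, ?_, ?_⟩
    · rw [neg9, add9, h99]; ring
    · have : θ ^ 9 = -θ := by linear_combination θ * hθ8
      rw [div_pow, neg9, sub9, h99, this]
      field_simp
      ring
    · field_simp
      linear_combination z * h3
  have q1 := hE e he x
  have q2 := hE e' he' (θ * x)
  have q3 := hT x
  have q4 := hE e' he' θ
  have : B ((e + e' * θ) * x) = B (e * x) + B (e' * (θ * x)) := by
    rw [← map_add]; congr 1; ring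
  rw [hz, this, map_add]
  apply mul_right_cancel₀ hb1
  linear_combination B 1 * q1 + B 1 * q2 + B e' * q3 - B x * q4

theorem stmt_19 (f : Polynomial (ZMod 3)) (hirr : Irreducible f) (hdeg : f.natDegree = 4)
    (hprim : ∀ y : AdjoinRoot f, y ≠ 0 → ∃ m : ℕ, AdjoinRoot.root f ^ m = y) :
    ¬ ∃ B : AdjoinRoot f →ₗ[ZMod 3] AdjoinRoot f,
        ∀ m : ℕ, ∃ m' : ℕ,
          B (AdjoinRoot.root f ^ m) = AdjoinRoot.root f ^ m' ∧
          (m' : ZMod 5) = Equiv.swap (1 : ZMod 5) 2 (m : ZMod 5) := by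
  rintro ⟨B, hB⟩
  have : Fact (Irreducible f) := ⟨hirr⟩
  have : Fact (Nat.Prime 3) := ⟨Nat.prime_three⟩
  have : CharP (AdjoinRoot f) 3 := charP_of_injective_algebraMap
    (algebraMap (ZMod 3) (AdjoinRoot f)).injective 3
  let pb := AdjoinRoot.powerBasis hirr.ne_zero
  have : Module.Finite (ZMod 3) (AdjoinRoot f) := pb.finite
  have : Finite (AdjoinRoot f) := Module.finite_of_finite (ZMod 3)
  letI : Fintype (AdjoinRoot f) := Fintype.ofFinite _
  have hcard : Fintype.card (AdjoinRoot f) = 81 := by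
    rw [Module.card_eq_pow_finrank (K := ZMod 3), pb.finrank, ZMod.card,
      AdjoinRoot.powerBasis_dim, hdeg]
    norm_num
  have h81 : ∀ z : AdjoinRoot f, z ^ 81 = z := fun z => hcard ▸ FiniteField.pow_card z
  have h3 : (3 : AdjoinRoot f) = 0 := by exact_mod_cast CharP.cast_eq_zero (AdjoinRoot f) 3
  have h2 : (2 : AdjoinRoot f) ≠ 0 := by
    intro h
    exact one_ne_zero (α := AdjoinRoot f) (by linear_combination h3 - h)
  generalize hω : AdjoinRoot.root f = ω at *
  have hω0 : ω ≠ 0 := by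
    rintro rfl
    obtain ⟨m, hm⟩ := hprim (-1) (neg_ne_zero.2 one_ne_zero)
    rcases Nat.eq_zero_or_pos m with rfl | hpos
    · exact h2 (by linear_combination hm)
    · rw [zero_pow hpos.ne'] at hm
      exact one_ne_zero (α := AdjoinRoot f) (by linear_combination hm)
  have hord : orderOf ω = 80 := by
    have h := orderOf_eq_card_of_forall_mem_zpowers (g := Units.mk0 ω hω0) (by
      intro u
      obtain ⟨m, hm⟩ := hprim u u.ne_zero
      exact ⟨m, Units.ext (by simpa using hm)⟩)
    rw [← orderOf_units, Units.val_mk0] at h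
    rw [h, Nat.card_units, Nat.card_eq_fintype_card, hcard]
  have hmod : ∀ a b : ℕ, ω ^ a = ω ^ b ↔ a ≡ b [MOD 80] := by
    intro a b
    have h := pow_eq_pow_iff_modEq (x := Units.mk0 ω hω0) (n := a) (m := b)
    rw [← orderOf_units, Units.val_mk0, hord] at h
    rw [← h, Units.ext_iff]
    simp
  have hcong : ∀ a b : ℕ, ω ^ a = ω ^ b → (a : ZMod 5) = b := by
    intro a b hab
    have h := (hmod a b).1 hab
    exact (ZMod.natCast_eq_natCast_iff _ _ _).2 (h.of_dvd (by norm_num))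
  have hpow16 : ∀ a b : ℕ, (a : ZMod 5) = b → (ω ^ a) ^ 16 = (ω ^ b) ^ 16 := by
    intro a b hab
    rw [← pow_mul, ← pow_mul, hmod]
    exact ((ZMod.natCast_eq_natCast_iff _ _ _).1 hab).mul_right' 16
  have hinj : ∀ x, B x = 0 → x = 0 := by
    intro x hx
    by_contra hx0
    obtain ⟨m, rfl⟩ := hprim x hx0
    obtain ⟨m', hm', -⟩ := hB m
    exact pow_ne_zero m' hω0 (hm'.symm.trans hx)
  have hcol : ∀ l x : AdjoinRoot f, x ≠ 0 → l ^ 16 = 1 → (B (l * x)) ^ 16 = (B x) ^ 16 := by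
    intro l x hx hl
    have hl0 : l ≠ 0 := by rintro rfl; simp at hl
    obtain ⟨m, rfl⟩ := hprim x hx
    obtain ⟨k, rfl⟩ := hprim l hl0
    have hk : ((k : ℕ) : ZMod 5) = 0 := by
      rw [← pow_mul] at hl
      have := orderOf_dvd_of_pow_eq_one hl
      rw [hord] at this
      rw [ZMod.natCast_eq_zero_iff]
      omega
    rw [← pow_add]
    obtain ⟨a, ha, ha'⟩ := hB (k + m)
    obtain ⟨b, hb, hb'⟩ := hB m
    rw [ha, hb]
    apply hpow16
    rw [ha', hb', Nat.cast_add, hk, zero_add]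
  have hθ8 : (ω ^ 5) ^ 8 = -1 := by
    have h80 : ω ^ 80 = 1 := hord ▸ pow_orderOf_eq_one ω
    have h40 : ω ^ 40 ≠ 1 := by
      intro h
      have := orderOf_dvd_of_pow_eq_one h
      rw [hord] at this
      omega
    have : (ω ^ 40 - 1) * (ω ^ 40 + 1) = 0 := by linear_combination h80
    have := (mul_eq_zero.1 this).resolve_left (sub_ne_zero.2 h40)
    linear_combination this
  have hmul := mul_of_color h81 B.toAddMonoidHom hinj hcol (ω ^ 5) hθ8 ω ω
  simp only [LinearMap.toAddMonoidHom_coe] at hmul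
  obtain ⟨a, ha, ha'⟩ := hB 0
  obtain ⟨b, hb, hb'⟩ := hB 1
  obtain ⟨c, hc, hc'⟩ := hB 2
  rw [pow_zero] at ha
  rw [pow_one] at hb
  rw [← pow_two, ha, hb, hc, ← pow_add, ← pow_add] at hmul
  have := hcong _ _ hmul
  rw [Nat.cast_add, Nat.cast_add, ha', hb', hc'] at this
  revert this
  decide
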